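/- Every width-w DNF f on n variables can be ε-approximated under the uniform distribution by a width-w DNF g of size at most (2 + (1/w)·log_2(1/ε))^{Cw} for an absolute constant C, where g is obtained from f by deleting terms (so g(x) ≤ f(x) pointwise) and Pr_x[f(x) ≠ g(x)] ≤ ε. -/

import Mathlib

open Finset
open scoped Classical BigOperators

noncomputable section

/-- A term over `n` Boolean variables, given as a partial assignment:
`C i = some b` means the literal `x i = b` appears in the term. -/
abbrev Term (n : ℕ) := Fin n → Option Bool

/-- Satisfaction of a term by an assignment. -/
def TermSat {n : ℕ} (C : Term n) (x : Fin n → Bool) : Prop :=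
  ∀ i b, C i = some b → x i = b

/-- Width of a term: the number of variables it mentions. -/
def termWidth {n : ℕ} (C : Term n) : ℕ :=
  (Finset.univ.filter fun i => C i ≠ none).card

/-- The index function of a decision list with terms `C`:
the first index whose term is satisfied by `x` (and `m` conventionally if none,
since `sInf ∅ = 0`; the default rule hypothesis makes the set nonempty). -/
def DLind {n m : ℕ} (C : Fin m → Term n) (x : Fin n → Bool) : ℕ :=
  sInf {i : ℕ | ∃ h : i < m, TermSat (C ⟨i, h⟩) x}

/-- Evaluation of a decision list with terms `C` and values `v`. -/
def DLeval {n m : ℕ} {V : Type} [Inhabited V] (C : Fin m → Term n)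
    (v : Fin m → V) (x : Fin n → Bool) : V :=
  if h : DLind C x < m then v ⟨DLind C x, h⟩ else default

/-- Probability of an event under the uniform distribution on `{0,1}^n`. -/
def pr (n : ℕ) (P : (Fin n → Bool) → Prop) : ℝ :=
  ((Finset.univ.filter P).card : ℝ) / 2 ^ n

/-- Hit probability of index `i` in the decision list with terms `C`. -/
def pL {n m : ℕ} (C : Fin m → Term n) (i : ℕ) : ℝ :=
  pr n fun x => DLind C x = i

/-- The index function of the sub-decision-list `L|_J`. -/
def DLindSub {n m : ℕ} (C : Fin m → Term n) (J : Finset (Fin m)) (x : Fin n → Bool) : ℕ :=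
  sInf {i : ℕ | ∃ h : i < m, (⟨i, h⟩ : Fin m) ∈ J ∧ TermSat (C ⟨i, h⟩) x}

/-- Evaluation of the sub-decision-list `L|_J`. -/
def DLevalSub {n m : ℕ} {V : Type} [Inhabited V] (C : Fin m → Term n) (v : Fin m → V)
    (J : Finset (Fin m)) (x : Fin n → Bool) : V :=
  if h : DLindSub C J x < m then v ⟨DLindSub C J x, h⟩ else default

/-- A restriction: `some b` fixes a coordinate to `b`, `none` is a star. -/
abbrev Restriction (n : ℕ) := Fin n → Option Bool

/-- `x` is a completion of the restriction `ρ`. -/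
def Compatible {n : ℕ} (ρ : Restriction n) (x : Fin n → Bool) : Prop :=
  ∀ i b, ρ i = some b → x i = b

/-- Number of stars of a restriction. -/
def stars {n : ℕ} (ρ : Restriction n) : ℕ :=
  (Finset.univ.filter fun i => ρ i = none).card

/-- Weight of a restriction under the product distribution `U(n, α)`:
each coordinate independently `*` with probability `α`, and `0` or `1`
each with probability `(1-α)/2`. -/
def restW {n : ℕ} (α : ℝ) (ρ : Restriction n) : ℝ :=
  ∏ i : Fin n, if ρ i = none then α else (1 - α) / 2

/-- Index `i` is useful in the restricted decision list `L↾ρ`: some completion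
of `ρ` hits rule `i`. -/
def Useful {n m : ℕ} (C : Fin m → Term n) (ρ : Restriction n) (i : Fin m) : Prop :=
  ∃ x, Compatible ρ x ∧ DLind C x = i.val

/-- Number of useful indices of `L↾ρ`. -/
def useNum {n m : ℕ} (C : Fin m → Term n) (ρ : Restriction n) : ℕ :=
  (Finset.univ.filter fun i : Fin m => Useful C ρ i).card

/-- `q_L(α, i)`: probability over `ρ ~ U(n, α)` that index `i` is useful in `L↾ρ`. -/
def qL {n m : ℕ} (C : Fin m → Term n) (α : ℝ) (i : Fin m) : ℝ :=
  ∑ ρ : Restriction n, restW α ρ * (if Useful C ρ i then 1 else 0)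

/-- Transition weight of the `β`-noise on a single bit. -/
def noiseW (β : ℝ) (a b : Bool) : ℝ := if a = b then (1 + β) / 2 else (1 - β) / 2

/-- Joint density of `(x, y)` where `x` is uniform and `y ~ N_β(x)`. -/
def pairW {n : ℕ} (β : ℝ) (x y : Fin n → Bool) : ℝ :=
  (1 / 2) ^ n * ∏ i : Fin n, noiseW β (x i) (y i)

/-- `Stab_L(β, i) = Pr[Ind L(x) = Ind L(y) = i]` for `x` uniform, `y ~ N_β(x)`. -/
def StabInd {n m : ℕ} (C : Fin m → Term n) (β : ℝ) (i : Fin m) : ℝ :=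
  ∑ x : Fin n → Bool, ∑ y : Fin n → Bool,
    pairW β x y * (if DLind C x = i.val ∧ DLind C y = i.val then 1 else 0)

/-- `Stab_β(g) = Pr[g(x) = g(y) = 1]` for `x` uniform, `y ~ N_β(x)`. -/
def stab {n : ℕ} (β : ℝ) (g : (Fin n → Bool) → Bool) : ℝ :=
  ∑ x : Fin n → Bool, ∑ y : Fin n → Bool,
    pairW β x y * (if g x = true ∧ g y = true then 1 else 0)

/-- Probability weight that a uniform completion of `ρ` equals `x`. -/
def compW {n : ℕ} (ρ : Restriction n) (x : Fin n → Bool) : ℝ :=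
  if Compatible ρ x then (1 / 2) ^ stars ρ else 0

/-- Evaluation of a DNF with terms `T`. -/
def DNFeval {n M : ℕ} (T : Fin M → Term n) (x : Fin n → Bool) : Prop :=
  ∃ t, TermSat (T t) x

/-!
Keep the terms `i` whose probability `p i` of being the first satisfied one is large. Two facts
about a random restriction `ρ` with star probability `1 - δ` give `∑ i, p i ^ δ ≤ (2 / δ) ^ w`.

* A set of measure `p` has a point compatible with `ρ` with probability at least `p ^ δ`; this
  follows by induction on the dimension from a two-point inequality.
* If some completion of `ρ` first satisfies term `i`, then overriding `ρ` by term `i` gives a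
  restriction whose first forced term is `i`. Overriding by a term of width at most `w` multiplies
  probabilities by at most `(2 / δ) ^ w`, and a restriction has at most one first forced term.

A sequence with bounded `δ`-th power sum has few large entries, and its small entries have small
total; taking `1 / δ = 2 + log₂ (1 / ε) / w` balances the two.
-/

/-- Weight of a single coordinate of a restriction under `U(n, α)`; `restW` is the product of these
weights. -/
def coordW (α : ℝ) (a : Option Bool) : ℝ := if a = none then α else (1 - α) / 2

/-- Probability of an event about restrictions under `ρ ~ U(n, α)`. -/
def restPr {n : ℕ} (α : ℝ) (R : Restriction n → Prop) : ℝ := ∑ ρ with R ρ, restW α ρ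

/-- The event `A` has not been ruled out by `ρ`: some completion of `ρ` lies in `A`. -/
def Admits {n : ℕ} (ρ : Restriction n) (A : (Fin n → Bool) → Prop) : Prop :=
  ∃ x, Compatible ρ x ∧ A x

/-- The restriction `ρ` fixes every literal of the term `C` to true. -/
def Forces {n : ℕ} (ρ : Restriction n) (C : Term n) : Prop :=
  ∀ i b, C i = some b → ρ i = some b

/-- The restriction that agrees with the term `C` on its variables and with `ρ` elsewhere. -/
def override {n : ℕ} (C : Term n) (ρ : Restriction n) : Restriction n :=
  fun i => (C i).or (ρ i)

/-- The first term satisfied by `x` has index `i`. In contrast to `DLind`, no index is hit when no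
term is satisfied. -/
def FirstHit {n : ℕ} {ι : Type*} [LE ι] (T : ι → Term n) (i : ι) (x : Fin n → Bool) : Prop :=
  IsLeast {j | TermSat (T j) x} i

/-- The first term forced by the restriction `ρ` has index `i`. -/
def FirstForced {n : ℕ} {ι : Type*} [LE ι] (T : ι → Term n) (i : ι) (ρ : Restriction n) : Prop :=
  IsLeast {j | Forces ρ (T j)} i

section UniformProbability

variable {n : ℕ}

lemma sum_fin_succ_arrow {β M : Type*} [Fintype β] [AddCommMonoid M]
    (f : (Fin (n + 1) → β) → M) :
    ∑ x, f x = ∑ a, ∑ x : Fin n → β, f (Fin.cons a x) := by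
  rw [← (Fin.consEquiv fun _ : Fin (n + 1) => β).sum_comp, Fintype.sum_prod_type]
  rfl

lemma pr_nonneg (A : (Fin n → Bool) → Prop) : 0 ≤ pr n A := by
  unfold pr
  positivity

lemma pr_le_one (A : (Fin n → Bool) → Prop) : pr n A ≤ 1 := by
  rw [pr, div_le_one (by positivity)]
  simpa using Nat.cast_le (α := ℝ).2 (Finset.card_le_univ (Finset.univ.filter A))

lemma pr_mono {A A' : (Fin n → Bool) → Prop} (h : ∀ x, A x → A' x) : pr n A ≤ pr n A' := by
  unfold pr
  gcongr
  exact h _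

lemma pr_succ (A : (Fin (n + 1) → Bool) → Prop) :
    pr (n + 1) A =
      (pr n (fun x => A (Fin.cons false x)) + pr n (fun x => A (Fin.cons true x))) / 2 := by
  simp only [pr, ← Finset.sum_boole, sum_fin_succ_arrow, Fintype.sum_bool, pow_succ]
  ring

lemma pr_exists_mem_le_sum {ι : Type*} (s : Finset ι) (A : ι → (Fin n → Bool) → Prop) :
    pr n (fun x => ∃ i ∈ s, A i x) ≤ ∑ i ∈ s, pr n (A i) := by
  simp only [pr, ← Finset.sum_div]
  gcongr
  norm_cast
  refine (Finset.card_le_card fun x hx => ?_).trans Finset.card_biUnion_le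
  simpa using hx

end UniformProbability

section RandomRestrictions

variable {n : ℕ} {α : ℝ}

lemma coordW_nonneg (h0 : 0 ≤ α) (h1 : α ≤ 1) (a : Option Bool) : 0 ≤ coordW α a := by
  unfold coordW
  split_ifs <;> linarith

lemma sum_coordW (α : ℝ) : ∑ a, coordW α a = 1 := by
  simp only [Fintype.sum_option, Fintype.sum_bool, coordW, reduceCtorEq, if_true, if_false]
  ring

lemma restW_eq_prod (α : ℝ) (ρ : Restriction n) : restW α ρ = ∏ i, coordW α (ρ i) := rfl

lemma restW_nonneg (h0 : 0 ≤ α) (h1 : α ≤ 1) (ρ : Restriction n) : 0 ≤ restW α ρ :=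
  Finset.prod_nonneg fun i _ => coordW_nonneg h0 h1 (ρ i)

lemma restW_cons (α : ℝ) (a : Option Bool) (ρ : Restriction n) :
    restW α (Fin.cons a ρ : Restriction (n + 1)) = coordW α a * restW α ρ := by
  simp [restW_eq_prod, Fin.prod_univ_succ]

lemma sum_restW (n : ℕ) (α : ℝ) : ∑ ρ : Restriction n, restW α ρ = 1 := by
  simp only [restW_eq_prod, ← Fintype.prod_sum, sum_coordW, Finset.prod_const_one]

lemma restPr_nonneg (h0 : 0 ≤ α) (h1 : α ≤ 1) (R : Restriction n → Prop) : 0 ≤ restPr α R :=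
  Finset.sum_nonneg fun ρ _ => restW_nonneg h0 h1 ρ

lemma restPr_mono (h0 : 0 ≤ α) (h1 : α ≤ 1) {R R' : Restriction n → Prop}
    (h : ∀ ρ, R ρ → R' ρ) : restPr α R ≤ restPr α R' :=
  Finset.sum_le_sum_of_subset_of_nonneg (Finset.monotone_filter_right _ fun ρ _ => h ρ)
    fun ρ _ _ => restW_nonneg h0 h1 ρ

lemma restPr_succ (α : ℝ) (R : Restriction (n + 1) → Prop) :
    restPr α R = ∑ a, coordW α a * restPr α fun ρ : Restriction n => R (Fin.cons a ρ) := by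
  simp only [restPr, Finset.sum_filter, sum_fin_succ_arrow, restW_cons, Finset.mul_sum, mul_ite,
    mul_zero]

lemma sum_restPr_le_one {ι : Type*} (h0 : 0 ≤ α) (h1 : α ≤ 1) (s : Finset ι)
    {R : ι → Restriction n → Prop} (hR : ∀ ρ i j, R i ρ → R j ρ → i = j) :
    ∑ i ∈ s, restPr α (R i) ≤ 1 := by
  have hdisj : (s : Set ι).PairwiseDisjoint
      fun i => ({ρ | R i ρ} : Finset (Restriction n)) := fun i _ j _ hij =>
    Finset.disjoint_filter.2 fun ρ _ hi hj => hij (hR ρ i j hi hj)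
  calc ∑ i ∈ s, restPr α (R i)
      = ∑ ρ ∈ s.biUnion fun i => {ρ | R i ρ}, restW α ρ := (Finset.sum_biUnion hdisj).symm
    _ ≤ ∑ ρ : Restriction n, restW α ρ :=
        Finset.sum_le_univ_sum_of_nonneg (restW_nonneg h0 h1)
    _ = 1 := sum_restW n α

end RandomRestrictions

section SmallSets

variable {n : ℕ}

lemma compatible_cons {a : Option Bool} {ρ : Restriction n} {b : Bool} {x : Fin n → Bool} :
    Compatible (Fin.cons a ρ : Restriction (n + 1)) (Fin.cons b x : Fin (n + 1) → Bool) ↔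
      (∀ c, a = some c → b = c) ∧ Compatible ρ x := by
  simp [Compatible, Fin.forall_fin_succ]

lemma admits_cons_some {c : Bool} {ρ : Restriction n} {A : (Fin (n + 1) → Bool) → Prop} :
    Admits (Fin.cons (some c) ρ : Restriction (n + 1)) A ↔
      Admits ρ fun x => A (Fin.cons c x) := by
  cases c <;> simp [Admits, Fin.exists_fin_succ_pi, compatible_cons]

lemma admits_cons_none {ρ : Restriction n} {A : (Fin (n + 1) → Bool) → Prop} :
    Admits (Fin.cons none ρ : Restriction (n + 1)) A ↔
      Admits ρ fun x => A (Fin.cons false x) ∨ A (Fin.cons true x) := by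
  simp [Admits, Fin.exists_fin_succ_pi, compatible_cons, and_or_left, exists_or]

lemma Admits.mono {ρ : Restriction n} {A A' : (Fin n → Bool) → Prop} (h : ∀ x, A x → A' x) :
    Admits ρ A → Admits ρ A' :=
  fun ⟨x, hρ, hA⟩ => ⟨x, hρ, h x hA⟩

lemma restPr_admits_succ (α : ℝ) (A : (Fin (n + 1) → Bool) → Prop) :
    restPr α (Admits · A) =
      α * restPr α (Admits · fun x : Fin n → Bool => A (Fin.cons false x) ∨ A (Fin.cons true x)) +
        (1 - α) * ((restPr α (Admits · fun x : Fin n → Bool => A (Fin.cons false x)) +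
          restPr α (Admits · fun x : Fin n → Bool => A (Fin.cons true x))) / 2) := by
  simp only [restPr_succ, Fintype.sum_option, Fintype.sum_bool, admits_cons_some,
    admits_cons_none, coordW, reduceCtorEq, if_true, if_false]
  ring

lemma rpow_midpoint_le {a b δ : ℝ} (ha : 0 ≤ a) (hb : 0 ≤ b) (h0 : 0 ≤ δ) (h1 : δ ≤ 1) :
    ((a + b) / 2) ^ δ ≤ (1 - δ) * max (a ^ δ) (b ^ δ) + δ * ((a ^ δ + b ^ δ) / 2) := by
  wlog hab : a ≤ b generalizing a b
  · rw [add_comm a, add_comm (a ^ δ), max_comm]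
    exact this hb ha (le_of_not_ge hab)
  rw [max_eq_right (Real.rpow_le_rpow ha hab h0)]
  obtain rfl | hb := hb.eq_or_lt
  · obtain rfl : a = 0 := hab.antisymm ha
    simp only [add_zero, zero_div]
    linarith
  have ha_le : a ≤ a ^ δ * b ^ (1 - δ) := by
    calc a = a ^ δ * a ^ (1 - δ) := by
          rw [← Real.rpow_add' ha (by norm_num), add_sub_cancel, Real.rpow_one]
      _ ≤ a ^ δ * b ^ (1 - δ) := by gcongr
  have hb_eq : b ^ δ * b ^ (1 - δ) = b := by
    rw [← Real.rpow_add hb, add_sub_cancel, Real.rpow_one]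
  refine le_of_mul_le_mul_right ?_ (Real.rpow_pos_of_pos hb (1 - δ))
  calc ((a + b) / 2) ^ δ * b ^ (1 - δ)
      ≤ δ * ((a + b) / 2) + (1 - δ) * b :=
        Real.geom_mean_le_arith_mean2_weighted h0 (by linarith) (by positivity) hb.le (by ring)
    _ ≤ δ * ((a ^ δ * b ^ (1 - δ) + b ^ δ * b ^ (1 - δ)) / 2) +
          (1 - δ) * (b ^ δ * b ^ (1 - δ)) := by
        rw [hb_eq]
        gcongr
    _ = _ := by ring

lemma pr_rpow_le_restPr_admits {δ : ℝ} (h0 : 0 < δ) (h1 : δ ≤ 1)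
    (A : (Fin n → Bool) → Prop) : pr n A ^ δ ≤ restPr (1 - δ) (Admits · A) := by
  have hα : 0 ≤ 1 - δ := sub_nonneg.2 h1
  have hα1 : 1 - δ ≤ 1 := sub_le_self 1 h0.le
  induction n with
  | zero =>
    by_cases hA : ∃ x, A x
    · obtain ⟨x, hx⟩ := hA
      have hadm : ∀ ρ : Restriction 0, Admits ρ A := fun ρ => ⟨x, fun i => i.elim0, hx⟩
      calc pr 0 A ^ δ ≤ 1 := Real.rpow_le_one (pr_nonneg A) (pr_le_one A) h0.le
        _ = restPr (1 - δ) (Admits · A) := by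
            simp only [restPr, hadm, Finset.filter_true, sum_restW]
    · have hpr : pr 0 A = 0 := by simp [pr, not_exists.1 hA]
      rw [hpr, Real.zero_rpow h0.ne']
      exact restPr_nonneg hα hα1 _
  | succ n ih =>
    let A₀ : (Fin n → Bool) → Prop := fun x => A (Fin.cons false x)
    let A₁ : (Fin n → Bool) → Prop := fun x => A (Fin.cons true x)
    have hmax : max (pr n A₀ ^ δ) (pr n A₁ ^ δ) ≤
        restPr (1 - δ) (Admits · fun x => A₀ x ∨ A₁ x) :=
      max_le
        ((ih A₀).trans (restPr_mono hα hα1 fun ρ => Admits.mono fun x => Or.inl))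
        ((ih A₁).trans (restPr_mono hα hα1 fun ρ => Admits.mono fun x => Or.inr))
    calc pr (n + 1) A ^ δ
        = ((pr n A₀ + pr n A₁) / 2) ^ δ := by rw [pr_succ]
      _ ≤ (1 - δ) * max (pr n A₀ ^ δ) (pr n A₁ ^ δ) +
            δ * ((pr n A₀ ^ δ + pr n A₁ ^ δ) / 2) :=
          rpow_midpoint_le (pr_nonneg _) (pr_nonneg _) h0.le h1
      _ ≤ (1 - δ) * restPr (1 - δ) (Admits · fun x => A₀ x ∨ A₁ x) +
            δ * ((restPr (1 - δ) (Admits · A₀) + restPr (1 - δ) (Admits · A₁)) / 2) := by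
          gcongr
          exacts [ih A₀, ih A₁]
      _ = restPr (1 - δ) (Admits · A) := by rw [restPr_admits_succ, sub_sub_cancel]

end SmallSets

section Encoding

variable {n : ℕ} {α : ℝ}

lemma forces_override (C : Term n) (ρ : Restriction n) : Forces (override C ρ) C :=
  fun i b hb => by simp [override, hb]

lemma TermSat.of_forces_override {C D : Term n} {ρ : Restriction n} {x : Fin n → Bool}
    (hC : TermSat C x) (hρ : Compatible ρ x) (hD : Forces (override C ρ) D) : TermSat D x := by
  intro i b hb
  obtain hCi | ⟨-, hρi⟩ := Option.or_eq_some_iff.1 (hD i b hb)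
  exacts [hC i b hCi, hρ i b hρi]

lemma sum_coordW_or (hα : α ≠ 1) {c s : Option Bool} (hs : ∀ b, c = some b → s = some b) :
    ∑ a with c.or a = s, coordW α a = (if c ≠ none then 2 / (1 - α) else 1) * coordW α s := by
  cases c with
  | none =>
    change ∑ a with a = s, coordW α a = _
    simp [Finset.sum_filter]
  | some b =>
    have : 1 - α ≠ 0 := sub_ne_zero.2 hα.symm
    rw [hs b rfl]
    simp only [Option.some_or, Finset.filter_true, sum_coordW]
    simp only [coordW, ne_eq, reduceCtorEq, not_false_eq_true, if_true, if_false]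
    field_simp

lemma sum_restW_override_eq (hα : α ≠ 1) {C : Term n} {σ : Restriction n} (hσ : Forces σ C) :
    ∑ ρ with override C ρ = σ, restW α ρ = (2 / (1 - α)) ^ termWidth C * restW α σ := by
  have hfiber : ({ρ | override C ρ = σ} : Finset (Restriction n)) =
      Fintype.piFinset fun i => {a | (C i).or a = σ i} := by
    ext ρ
    simp [override, funext_iff]
  calc ∑ ρ with override C ρ = σ, restW α ρ
      = ∏ i, ∑ a with (C i).or a = σ i, coordW α a := by
        rw [hfiber, Finset.prod_univ_sum]
        rfl
    _ = ∏ i, (if C i ≠ none then 2 / (1 - α) else 1) * coordW α (σ i) :=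
        Finset.prod_congr rfl fun i _ => sum_coordW_or hα (hσ i)
    _ = (2 / (1 - α)) ^ termWidth C * restW α σ := by
        rw [Finset.prod_mul_distrib, ← Finset.prod_filter, Finset.prod_const]
        rfl

lemma restPr_override (hα : α ≠ 1) {C : Term n} {R : Restriction n → Prop}
    (hR : ∀ σ, R σ → Forces σ C) :
    restPr α (fun ρ => R (override C ρ)) = (2 / (1 - α)) ^ termWidth C * restPr α R := by
  calc restPr α (fun ρ => R (override C ρ))
      = ∑ ρ with R (override C ρ), ∑ _σ ∈ {override C ρ}, restW α ρ := by
        simp only [restPr, Finset.sum_singleton]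
    _ = ∑ σ with R σ, ∑ ρ with override C ρ = σ, restW α ρ :=
        Finset.sum_comm' fun ρ σ => by
          simp only [Finset.mem_filter_univ, Finset.mem_singleton]
          grind
    _ = ∑ σ with R σ, (2 / (1 - α)) ^ termWidth C * restW α σ :=
        Finset.sum_congr rfl fun σ hσ =>
          sum_restW_override_eq hα (hR σ (Finset.mem_filter_univ σ |>.1 hσ))
    _ = (2 / (1 - α)) ^ termWidth C * restPr α R := (Finset.mul_sum ..).symm

end Encoding

section FirstHit

variable {n w : ℕ} {ι : Type*} [PartialOrder ι] {T : ι → Term n}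

lemma finite_setOf_exists_firstHit (T : ι → Term n) : {i | ∃ x, FirstHit T i x}.Finite := by
  rw [Set.ofPred_exists]
  exact Set.finite_iUnion fun x => Set.Subsingleton.finite fun i hi j hj => IsLeast.unique hi hj

lemma Admits.firstForced_override {i : ι} {ρ : Restriction n}
    (h : Admits ρ (FirstHit T i)) : FirstForced T i (override (T i) ρ) := by
  obtain ⟨x, hρ, hsat, hmin⟩ := h
  exact ⟨forces_override (T i) ρ, fun j hj => hmin (hsat.of_forces_override hρ hj)⟩

lemma restPr_admits_firstHit_le {δ : ℝ} (h0 : 0 < δ) (h1 : δ ≤ 1) {i : ι}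
    (hT : termWidth (T i) ≤ w) :
    restPr (1 - δ) (Admits · (FirstHit T i)) ≤ (2 / δ) ^ w * restPr (1 - δ) (FirstForced T i) := by
  have hα : 0 ≤ 1 - δ := sub_nonneg.2 h1
  have hα1 : 1 - δ ≤ 1 := sub_le_self 1 h0.le
  calc restPr (1 - δ) (Admits · (FirstHit T i))
      ≤ restPr (1 - δ) (fun ρ => FirstForced T i (override (T i) ρ)) :=
        restPr_mono hα hα1 fun ρ => Admits.firstForced_override
    _ = (2 / δ) ^ termWidth (T i) * restPr (1 - δ) (FirstForced T i) := by
        rw [restPr_override (by linarith) fun σ hσ => hσ.1, sub_sub_cancel]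
    _ ≤ (2 / δ) ^ w * restPr (1 - δ) (FirstForced T i) := by
        have := restPr_nonneg hα hα1 (FirstForced T i)
        gcongr
        rw [le_div_iff₀ h0]
        linarith

lemma sum_pr_firstHit_rpow_le {δ : ℝ} (h0 : 0 < δ) (h1 : δ ≤ 1)
    (hT : ∀ t, termWidth (T t) ≤ w) (s : Finset ι) :
    ∑ i ∈ s, pr n (FirstHit T i) ^ δ ≤ (2 / δ) ^ w := by
  calc ∑ i ∈ s, pr n (FirstHit T i) ^ δ
      ≤ ∑ i ∈ s, (2 / δ) ^ w * restPr (1 - δ) (FirstForced T i) :=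
        Finset.sum_le_sum fun i _ => (pr_rpow_le_restPr_admits h0 h1 _).trans
          (restPr_admits_firstHit_le h0 h1 (hT i))
    _ = (2 / δ) ^ w * ∑ i ∈ s, restPr (1 - δ) (FirstForced T i) := (Finset.mul_sum ..).symm
    _ ≤ (2 / δ) ^ w * 1 := by
        gcongr
        exact sum_restPr_le_one (sub_nonneg.2 h1) (sub_le_self 1 h0.le) s
          fun ρ i j hi hj => IsLeast.unique hi hj
    _ = (2 / δ) ^ w := mul_one _

end FirstHit

section Threshold

variable {ι : Type*} {s : Finset ι} {p : ι → ℝ} {δ θ : ℝ}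

lemma card_filter_mul_rpow_le_sum_rpow (hp : ∀ i ∈ s, 0 ≤ p i) (hθ : 0 ≤ θ) (hδ : 0 ≤ δ) :
    #{i ∈ s | θ ≤ p i} * θ ^ δ ≤ ∑ i ∈ s, p i ^ δ := by
  calc #{i ∈ s | θ ≤ p i} * θ ^ δ
      = ∑ i ∈ s with θ ≤ p i, θ ^ δ := by rw [Finset.sum_const, nsmul_eq_mul]
    _ ≤ ∑ i ∈ s with θ ≤ p i, p i ^ δ := by
        refine Finset.sum_le_sum fun i hi => ?_
        exact Real.rpow_le_rpow hθ (Finset.mem_filter.1 hi).2 hδ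
    _ ≤ ∑ i ∈ s, p i ^ δ :=
        Finset.sum_le_sum_of_subset_of_nonneg (Finset.filter_subset _ _)
          fun i hi _ => Real.rpow_nonneg (hp i hi) δ

lemma sum_filter_lt_le_rpow_mul_sum_rpow (hp : ∀ i ∈ s, 0 ≤ p i) (hθ : 0 ≤ θ) (hδ : δ ≤ 1) :
    ∑ i ∈ s with p i < θ, p i ≤ θ ^ (1 - δ) * ∑ i ∈ s, p i ^ δ := by
  calc ∑ i ∈ s with p i < θ, p i
      = ∑ i ∈ s with p i < θ, p i ^ (1 - δ) * p i ^ δ := by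
        refine Finset.sum_congr rfl fun i hi => ?_
        rw [← Real.rpow_add' (hp i (Finset.mem_filter.1 hi).1) (by norm_num), sub_add_cancel,
          Real.rpow_one]
    _ ≤ ∑ i ∈ s with p i < θ, θ ^ (1 - δ) * p i ^ δ := by
        refine Finset.sum_le_sum fun i hi => ?_
        obtain ⟨hi, hlt⟩ := Finset.mem_filter.1 hi
        have := hp i hi
        gcongr
    _ ≤ ∑ i ∈ s, θ ^ (1 - δ) * p i ^ δ :=
        Finset.sum_le_sum_of_subset_of_nonneg (Finset.filter_subset _ _) fun i hi _ =>
          mul_nonneg (Real.rpow_nonneg hθ _) (Real.rpow_nonneg (hp i hi) δ)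
    _ = θ ^ (1 - δ) * ∑ i ∈ s, p i ^ δ := (Finset.mul_sum ..).symm

lemma exists_subset_card_le_sum_sdiff_le {Q ε : ℝ} (hp : ∀ i ∈ s, 0 ≤ p i) (hδ0 : 0 ≤ δ)
    (hδ1 : δ < 1) (hQ : 0 < Q) (hε : 0 < ε) (hsum : ∑ i ∈ s, p i ^ δ ≤ Q) :
    ∃ S ⊆ s, #S ≤ Q * (Q / ε) ^ (δ / (1 - δ)) ∧ ∑ i ∈ s \ S, p i ≤ ε := by
  have hδ : 1 - δ ≠ 0 := (sub_pos.2 hδ1).ne'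
  -- the threshold for which the bound `θ ^ (1 - δ) * Q` on the discarded mass equals `ε`
  set θ : ℝ := (ε / Q) ^ (1 - δ)⁻¹
  have hθ : 0 < θ := by positivity
  have hθ_rpow : θ ^ (1 - δ) = ε / Q := Real.rpow_inv_rpow (by positivity) hδ
  have hθ_inv : (θ ^ δ)⁻¹ = (Q / ε) ^ (δ / (1 - δ)) := by
    rw [← Real.rpow_mul (by positivity), ← Real.inv_rpow (by positivity), inv_div,
      inv_mul_eq_div]
  refine ⟨{i ∈ s | θ ≤ p i}, Finset.filter_subset _ _, ?_, ?_⟩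
  · rw [← hθ_inv, ← div_eq_mul_inv, le_div_iff₀ (by positivity)]
    exact (card_filter_mul_rpow_le_sum_rpow hp hθ.le hδ0).trans hsum
  · calc ∑ i ∈ s \ {i ∈ s | θ ≤ p i}, p i
        = ∑ i ∈ s with p i < θ, p i := by simp only [← Finset.filter_not, not_le]
      _ ≤ θ ^ (1 - δ) * ∑ i ∈ s, p i ^ δ := sum_filter_lt_le_rpow_mul_sum_rpow hp hθ.le hδ1.le
      _ ≤ ε / Q * Q := by
          rw [hθ_rpow]
          gcongr
      _ = ε := div_mul_cancel₀ ε hQ.ne'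

end Threshold

lemma two_mul_pow_mul_rpow_le_rpow {w : ℕ} {B ε : ℝ} (hB : 2 ≤ B) (hε : 0 < ε)
    (hεB : Real.logb 2 (1 / ε) ≤ w * (B - 1)) :
    (2 * B) ^ w * ((2 * B) ^ w / ε) ^ (B - 1)⁻¹ ≤ B ^ (5 * w : ℝ) := by
  have hB1 : 0 < B - 1 := by linarith
  have hQ : ((2 * B) ^ w : ℝ) ^ (B - 1)⁻¹ ≤ (2 * B) ^ w :=
    Real.rpow_le_self_of_one_le (one_le_pow₀ (by linarith)) (inv_le_one_of_one_le₀ (by linarith))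
  have hinv : (1 / ε) ^ (B - 1)⁻¹ ≤ (2 : ℝ) ^ w := by
    rw [Real.rpow_inv_le_iff_of_pos (by positivity) (by positivity) hB1, ← Real.rpow_natCast,
      ← Real.rpow_mul two_pos.le]
    exact (Real.logb_le_iff_le_rpow one_lt_two (by positivity)).1 hεB
  calc (2 * B) ^ w * ((2 * B) ^ w / ε) ^ (B - 1)⁻¹
      = (2 * B) ^ w * (((2 * B) ^ w) ^ (B - 1)⁻¹ * (1 / ε) ^ (B - 1)⁻¹) := by
        rw [← Real.mul_rpow (by positivity) (by positivity), mul_one_div]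
    _ ≤ (2 * B) ^ w * ((2 * B) ^ w * 2 ^ w) := by gcongr
    _ ≤ (B * B) ^ w * ((B * B) ^ w * B ^ w) := by gcongr
    _ = B ^ (5 * w) := by ring
    _ = B ^ (5 * w : ℝ) := by rw [← Real.rpow_natCast]; norm_cast

/-- Whatever values the rules carry, keeping only the rules in `S` alters a decision list with
terms `T` only on the event bounded here. -/
theorem exists_finset_pr_firstHit_notMem_le {n w : ℕ} {ι : Type*} [PartialOrder ι]
    (T : ι → Term n) {ε : ℝ} (hw : 1 ≤ w) (hε0 : 0 < ε) (hε1 : ε ≤ 1)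
    (hT : ∀ t, termWidth (T t) ≤ w) :
    ∃ S : Finset ι, #S ≤ (2 + Real.logb 2 (1 / ε) / w) ^ (5 * w : ℝ) ∧
      pr n (fun x => ∃ i ∉ S, FirstHit T i x) ≤ ε := by
  have hw : (0 : ℝ) < w := by exact_mod_cast hw
  set L := Real.logb 2 (1 / ε)
  have hL : 0 ≤ L := Real.logb_nonneg one_lt_two (one_le_one_div hε0 hε1)
  set B := 2 + L / w
  have hB : 2 ≤ B := le_add_of_nonneg_right (by positivity)
  have hLB : L ≤ w * (B - 1) := by
    rw [← div_le_iff₀' hw]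
    linarith
  let H := (finite_setOf_exists_firstHit T).toFinset
  have hsum : ∑ i ∈ H, pr n (FirstHit T i) ^ B⁻¹ ≤ (2 * B) ^ w := by
    simpa using sum_pr_firstHit_rpow_le (by positivity) (inv_le_one_of_one_le₀ (by linarith)) hT H
  obtain ⟨S, -, hcard, herr⟩ := exists_subset_card_le_sum_sdiff_le (fun i _ => pr_nonneg _)
    (by positivity) (inv_lt_one_of_one_lt₀ (by linarith)) (by positivity) hε0 hsum
  have hexp : B⁻¹ / (1 - B⁻¹) = (B - 1)⁻¹ := by field_simp
  refine ⟨S, (hexp ▸ hcard).trans (two_mul_pow_mul_rpow_le_rpow hB hε0 hLB), ?_⟩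
  calc pr n (fun x => ∃ i ∉ S, FirstHit T i x)
      ≤ pr n (fun x => ∃ i ∈ H \ S, FirstHit T i x) :=
        pr_mono fun x ⟨i, hiS, hi⟩ => ⟨i, Finset.mem_sdiff.2 ⟨by simpa [H] using ⟨x, hi⟩, hiS⟩, hi⟩
    _ ≤ ∑ i ∈ H \ S, pr n (FirstHit T i) := pr_exists_mem_le_sum _ _
    _ ≤ ε := herr

theorem dnf_sparsification_general {n w : ℕ} {ι : Type*} (T : ι → Term n) {ε : ℝ}
    (hw : 1 ≤ w) (hε0 : 0 < ε) (hε1 : ε ≤ 1) (hT : ∀ t, termWidth (T t) ≤ w) :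
    ∃ S : Finset ι, #S ≤ (2 + Real.logb 2 (1 / ε) / w) ^ (5 * w : ℝ) ∧
      pr n (fun x => ¬((∃ t ∈ S, TermSat (T t) x) ↔ ∃ t, TermSat (T t) x)) ≤ ε := by
  obtain ⟨_, _⟩ := exists_wellFoundedLT ι
  obtain ⟨S, hcard, herr⟩ := exists_finset_pr_firstHit_notMem_le T hw hε0 hε1 hT
  refine ⟨S, hcard, (pr_mono fun x hx => ?_).trans herr⟩
  have hsat : ∃ t, TermSat (T t) x := by grind
  have hS : ¬∃ t ∈ S, TermSat (T t) x := by grind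
  obtain ⟨i, hi, hmin⟩ := WellFounded.has_min wellFounded_lt {t | TermSat (T t) x} hsat
  exact ⟨i, fun hiS => hS ⟨i, hiS, hi⟩, hi, fun j hj => not_lt.1 (hmin j hj)⟩

theorem dnf_sparsification :
    ∃ K : ℝ, 0 < K ∧
      ∀ (n M w : ℕ) (T : Fin M → Term n) (ε : ℝ),
        1 ≤ w → 0 < ε → ε ≤ 1 →
        (∀ t, termWidth (T t) ≤ w) →
        ∃ S : Finset (Fin M),
          (S.card : ℝ) ≤ (2 + Real.logb 2 (1 / ε) / w) ^ (K * w) ∧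
          pr n (fun x => ¬ ((∃ t ∈ S, TermSat (T t) x) ↔ DNFeval T x)) ≤ ε :=
  ⟨5, by norm_num, fun _ _ _ T _ => dnf_sparsification_general T⟩
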